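/- Let C1 ⊆ F_{q^m}^n be a linear code and C2 ⊊ C1 a subcode with dim C2 = dim C1 − l. Equip Ω = C1 with the uniform probability measure, let X : Ω → F_{q^m}^n be the identity map, and let S : Ω → C1/C2 be the quotient map x ↦ x + C2. Then for every 0 ≤ μ ≤ n, the maximum amount of information leakage over all matrices over the base field satisfies max over B ∈ F_q^{μ×n} of I(S ; X B^T) = K_{R,μ}(C2^⊥, C1^⊥) · m · log q, where mutual information is in nats. -/

import Mathlib

open scoped BigOperators

noncomputable section

variable (q : ℕ) (Fq : Type*) {Fqm : Type*} [Field Fq] [Field Fqm] [Algebra Fq Fqm]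

/-- `V = V^q`: the image of `V` under the coordinatewise `q`-th power map equals `V`
(membership in the family `Γ(F_{q^m}^n)`). -/
def IsGalClosed {n : ℕ} (V : Submodule Fqm (Fin n → Fqm)) : Prop :=
  (fun v : Fin n → Fqm => fun i => v i ^ q) '' (V : Set (Fin n → Fqm)) =
    (V : Set (Fin n → Fqm))

/-- The `i`-th relative dimension/intersection profile (RDIP) of `C1` and `C2`. -/
noncomputable def RDIP {n : ℕ} (C1 C2 : Submodule Fqm (Fin n → Fqm)) (i : ℕ) : ℕ :=
  sSup {d : ℕ | ∃ V : Submodule Fqm (Fin n → Fqm), IsGalClosed q V ∧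
    Module.finrank Fqm ↥V = i ∧
    d = Module.finrank Fqm ↥(C1 ⊓ V) - Module.finrank Fqm ↥(C2 ⊓ V)}

/-- The `i`-th relative generalized rank weight (RGRW) of `C1` and `C2`. -/
noncomputable def RGRW {n : ℕ} (C1 C2 : Submodule Fqm (Fin n → Fqm)) (i : ℕ) : ℕ :=
  sInf {d : ℕ | ∃ V : Submodule Fqm (Fin n → Fqm), IsGalClosed q V ∧
    d = Module.finrank Fqm ↥V ∧
    i ≤ Module.finrank Fqm ↥(C1 ⊓ V) - Module.finrank Fqm ↥(C2 ⊓ V)}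

/-- The rank weight `d_R(x,0)` of a vector: the `F_q`-dimension of the `F_q`-span of
its coordinates. -/
noncomputable def rankWeight {ι : Type*} (x : ι → Fqm) : ℕ :=
  Module.finrank Fq ↥(Submodule.span Fq (Set.range x))

/-- The minimum rank distance of a (nonzero) linear code. -/
noncomputable def minRankDist {ι : Type*} (C : Submodule Fqm (ι → Fqm)) : ℕ :=
  sInf {d : ℕ | ∃ x, x ∈ C ∧ x ≠ 0 ∧ d = rankWeight Fq x}

/-- The dual code with respect to the standard bilinear form `⟨x,y⟩ = ∑ i, x i * y i`. -/
def dualCode {n : ℕ} (V : Submodule Fqm (Fin n → Fqm)) : Submodule Fqm (Fin n → Fqm) where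
  carrier := {x | ∀ v ∈ V, ∑ i, x i * v i = 0}
  add_mem' := by
    intro a b ha hb v hv
    have h1 := ha v hv
    have h2 := hb v hv
    simp only [Set.mem_setOf_eq] at *
    simp only [Pi.add_apply, add_mul]
    rw [Finset.sum_add_distrib, h1, h2, add_zero]
  zero_mem' := by
    intro v hv
    simp
  smul_mem' := by
    intro c x hx v hv
    have h := hx v hv
    simp only [Set.mem_setOf_eq] at *
    simp only [Pi.smul_apply, smul_eq_mul, mul_assoc]
    rw [← Finset.mul_sum, h, mul_zero]


/-- Shannon entropy (in nats) of a random variable `f` on a finite probability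
space `Ω` equipped with the uniform measure:
`H(f) = - ∑_a P(f = a) log P(f = a) = - ∑_ω (1/|Ω|) log P(f = f ω)`. -/
noncomputable def unifEntropy {Ω : Type*} [Fintype Ω] {α : Type*} (f : Ω → α) : ℝ := by
  classical
  exact - ∑ ω : Ω, (1 / (Fintype.card Ω : ℝ)) *
      Real.log (((Finset.univ.filter fun ω' => f ω' = f ω).card : ℝ) /
        (Fintype.card Ω : ℝ))

/-- Mutual information (in nats) `I(f;g) = H(f) + H(g) - H(f,g)` of two random
variables on a finite probability space with the uniform measure. -/
noncomputable def unifMutualInfo {Ω : Type*} [Fintype Ω] {α β : Type*}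
    (f : Ω → α) (g : Ω → β) : ℝ :=
  unifEntropy f + unifEntropy g - unifEntropy fun ω => (f ω, g ω)

/-!
Under the uniform distribution a linear map over `L = F_{q^m}` has entropy `rank · log |L|`, so
the information leaked by `B` is a difference of dimensions. The duality
`dim (C ∩ Uᗮ) + dim U = dim C + dim (Cᗮ ∩ U)`, applied to `C1` and `C2` with `U` the `L`-span of the
rows of `B`, turns it into `(dim (C2ᗮ ∩ U) - dim (C1ᗮ ∩ U)) · log |L|`.

As the Frobenius generates the Galois group, Galois descent identifies the spaces `V = V^q` with the
scalar extensions of `F_q`-subspaces: a Galois-stable `V` contains the coordinatewise trace of each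
of its vectors, and a vector is recovered from the traces of its multiples by means of the
trace-dual basis. So the row spans of matrices over `F_q` are exactly the spaces over which the
profile is maximized, except that they may have dimension less than `μ`. Enlarging `U` does not
decrease `dim (C2ᗮ ∩ U) - dim (C1ᗮ ∩ U)`, so the maximum is the same.
-/

section Entropy

lemma unifEntropy_addMonoidHom {G H : Type*} [AddGroup G] [Fintype G] [AddGroup H] (f : G →+ H) :
    unifEntropy f = Real.log (Nat.card f.range) := by
  classical
  have card_fiber (x : G) : (Finset.univ.filter fun y ↦ f y = f x).card = Nat.card f.ker := by
    rw [AddMonoidHom.card_fiber_eq_of_mem_range f ⟨x, rfl⟩ ⟨0, map_zero f⟩, ← Fintype.card_subtype,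
      ← Nat.card_eq_fintype_card]
    rfl
  have card_mul : (Nat.card f.ker : ℝ) * Nat.card f.range = Fintype.card G := by
    rw [← AddSubgroup.index_ker, ← Nat.card_eq_fintype_card]
    exact_mod_cast f.ker.card_mul_index
  have card_pos : (0 : ℝ) < Fintype.card G := by exact_mod_cast Fintype.card_pos
  have probability : (Nat.card f.ker : ℝ) / Fintype.card G = (Nat.card f.range : ℝ)⁻¹ := by
    rw [← card_mul] at card_pos ⊢
    exact div_mul_cancel_left₀ (left_ne_zero_of_mul card_pos.ne') _
  calc unifEntropy f
      = -∑ _x : G, 1 / (Fintype.card G : ℝ) * Real.log (Nat.card f.range : ℝ)⁻¹ := by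
        refine congrArg Neg.neg (Finset.sum_congr rfl fun x _ ↦ ?_)
        rw [← probability, ← card_fiber x]
    _ = Real.log (Nat.card f.range) := by
        rw [Finset.sum_const, Finset.card_univ, nsmul_eq_mul, ← mul_assoc,
          mul_one_div_cancel card_pos.ne', Real.log_inv, one_mul, neg_neg]

variable {K M N P : Type*} [Field K] [AddCommGroup M] [Module K M] [Fintype M]
  [AddCommGroup N] [Module K N] [AddCommGroup P] [Module K P]

lemma unifEntropy_linearMap (f : M →ₗ[K] N) :
    unifEntropy f =
      ((Module.finrank K M : ℝ) - Module.finrank K f.ker) * Real.log (Nat.card K) := by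
  have rank_nullity : (Module.finrank K M : ℝ) - Module.finrank K f.ker =
      Module.finrank K f.range :=
    sub_eq_of_eq_add (mod_cast f.finrank_range_add_finrank_ker.symm)
  rw [rank_nullity, ← Real.log_pow, ← Nat.cast_pow, ← Module.natCard_eq_pow_finrank]
  exact unifEntropy_addMonoidHom f.toAddMonoidHom

lemma unifMutualInfo_linearMap (f : M →ₗ[K] N) (g : M →ₗ[K] P) :
    unifMutualInfo f g =
      ((Module.finrank K M : ℝ) + Module.finrank K ↥(f.ker ⊓ g.ker) - Module.finrank K f.ker
        - Module.finrank K g.ker) * Real.log (Nat.card K) := by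
  have joint : unifEntropy (fun x ↦ (f x, g x)) = _ := unifEntropy_linearMap (f.prod g)
  rw [unifMutualInfo, joint, unifEntropy_linearMap, unifEntropy_linearMap, LinearMap.ker_prod]
  ring

end Entropy

section Duality

lemma finrank_inf_orthogonal {K V : Type*} [Field K] [AddCommGroup V] [Module K V]
    [FiniteDimensional K V] {B : LinearMap.BilinForm K V} (hB : B.Nondegenerate) (hB' : B.IsRefl)
    (C U : Submodule K V) :
    Module.finrank K ↥(C ⊓ B.orthogonal U) + Module.finrank K U =
      Module.finrank K C + Module.finrank K ↥(B.orthogonal C ⊓ U) := by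
  have orthogonal_sup : B.orthogonal (B.orthogonal C ⊔ U) = C ⊓ B.orthogonal U := by
    refine le_antisymm (le_inf ?_ (B.orthogonal_le le_sup_right)) ?_
    · exact (B.orthogonal_le le_sup_left).trans_eq (B.orthogonal_orthogonal hB hB' C)
    · refine (B.le_orthogonal_orthogonal hB').trans (B.orthogonal_le (sup_le ?_ ?_))
      · exact B.orthogonal_le inf_le_left
      · exact (B.le_orthogonal_orthogonal hB').trans (B.orthogonal_le inf_le_right)
  have := B.finrank_orthogonal hB (B.orthogonal C ⊔ U)
  have := B.finrank_orthogonal hB C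
  have := Submodule.finrank_sup_add_finrank_inf_eq (B.orthogonal C) U
  have := (B.orthogonal C ⊔ U).finrank_le
  have := C.finrank_le
  rw [← orthogonal_sup]
  lia

variable {K : Type*} [Field K]

lemma dotProductBilin_isRefl (ι : Type*) [Fintype ι] :
    (dotProductBilin K K : LinearMap.BilinForm K (ι → K)).IsRefl :=
  fun x y h ↦ (dotProduct_comm y x).trans h

lemma dotProductBilin_nondegenerate (ι : Type*) [Fintype ι] :
    (dotProductBilin K K : LinearMap.BilinForm K (ι → K)).Nondegenerate :=
  (dotProductBilin_isRefl ι).nondegenerate_iff_separatingLeft.2 dotProduct_eq_zero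

variable {n : ℕ}

lemma dualCode_eq_orthogonal (V : Submodule K (Fin n → K)) :
    dualCode V = LinearMap.BilinForm.orthogonal (dotProductBilin K K) V := by
  ext x
  exact forall₂_congr fun v _ ↦ by rw [dotProductBilin_apply_apply, dotProduct_comm]; rfl

lemma dualCode_anti {C D : Submodule K (Fin n → K)} (h : C ≤ D) : dualCode D ≤ dualCode C :=
  fun _ hx v hv ↦ hx v (h hv)

lemma finrank_inf_dualCode (C U : Submodule K (Fin n → K)) :
    Module.finrank K ↥(C ⊓ dualCode U) + Module.finrank K U =
      Module.finrank K C + Module.finrank K ↥(dualCode C ⊓ U) := by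
  rw [dualCode_eq_orthogonal, dualCode_eq_orthogonal]
  exact finrank_inf_orthogonal (B := dotProductBilin K K) (dotProductBilin_nondegenerate (Fin n))
    (dotProductBilin_isRefl (Fin n)) C U

lemma mem_dualCode_span {s : Set (Fin n → K)} {x : Fin n → K} :
    x ∈ dualCode (Submodule.span K s) ↔ ∀ v ∈ s, x ⬝ᵥ v = 0 :=
  Submodule.span_le (p := (dotProductBilin K K x).ker)

end Duality

section Subspaces

variable {K V : Type*} [Field K] [AddCommGroup V] [Module K V]

/-- The amount `dim (D₁ ∩ U) - dim (D₂ ∩ U)` by which the intersection of `U` with a space `D₁`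
exceeds that with its subspace `D₂`; the subtraction truncates unless `D₂ ≤ D₁`. -/
def relDim (D₁ D₂ U : Submodule K V) : ℕ :=
  Module.finrank K ↥(D₁ ⊓ U) - Module.finrank K ↥(D₂ ⊓ U)

lemma relDim_mono [FiniteDimensional K V] {D₁ D₂ : Submodule K V} (hD : D₂ ≤ D₁) :
    Monotone (relDim D₁ D₂) := by
  intro U W hUW
  have inf_eq : (D₁ ⊓ U) ⊓ (D₂ ⊓ W) = D₂ ⊓ U := by
    rw [inf_inf_inf_comm, inf_eq_right.2 hD, inf_eq_left.2 hUW]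
  have sup_le : (D₁ ⊓ U) ⊔ (D₂ ⊓ W) ≤ D₁ ⊓ W :=
    sup_le (inf_le_inf_left _ hUW) (inf_le_inf_right _ hD)
  have finrank_sup := Submodule.finrank_sup_add_finrank_inf_eq (D₁ ⊓ U) (D₂ ⊓ W)
  have finrank_sup_le := Submodule.finrank_mono sup_le
  rw [inf_eq] at finrank_sup
  unfold relDim
  lia

lemma exists_ge_finrank_eq [FiniteDimensional K V] (W : Submodule K V) {k : ℕ}
    (hW : Module.finrank K W ≤ k) (hk : k ≤ Module.finrank K V) :
    ∃ W' : Submodule K V, W ≤ W' ∧ Module.finrank K W' = k := by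
  induction k, hW using Nat.le_induction with
  | base => exact ⟨W, le_rfl, rfl⟩
  | succ k _ ih =>
    obtain ⟨W', hWW', rfl⟩ := ih (Nat.le_of_succ_le hk)
    obtain ⟨v, hv⟩ := W'.exists_of_finrank_lt hk
    have v_notMem : v ∉ W' := by simpa using hv 1 one_ne_zero
    exact ⟨W' ⊔ Submodule.span K {v}, hWW'.trans le_sup_left,
      Submodule.finrank_sup_span_singleton v_notMem⟩

lemma exists_linearIndependent_span_range_eq [FiniteDimensional K V] {W : Submodule K V} {k : ℕ}
    (hW : Module.finrank K W = k) :
    ∃ B : Fin k → V, LinearIndependent K B ∧ Submodule.span K (Set.range B) = W := by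
  let b := Module.finBasisOfFinrankEq K W hW
  refine ⟨W.subtype ∘ b, b.linearIndependent.map' W.subtype W.ker_subtype, ?_⟩
  rw [Set.range_comp, ← Submodule.map_span, b.span_eq, Submodule.map_top, W.range_subtype]

end Subspaces

lemma unifMutualInfo_mkQ_dotProduct {K κ : Type*} [Field K] {n : ℕ}
    {C D : Submodule K (Fin n → K)} [Fintype C] (h : D ≤ C) (B : κ → Fin n → K) :
    unifMutualInfo (D.comap C.subtype).mkQ (fun x : C ↦ fun j ↦ (x : Fin n → K) ⬝ᵥ B j) =
      relDim (dualCode D) (dualCode C) (Submodule.span K (Set.range B)) *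
        Real.log (Nat.card K) := by
  set U := Submodule.span K (Set.range B)
  let f := (D.comap C.subtype).mkQ
  let g : C →ₗ[K] κ → K := .pi fun j ↦ (dotProductBilin K K).flip (B j) ∘ₗ C.subtype
  have ker_f : f.ker = D.comap C.subtype := Submodule.ker_mkQ _
  have ker_g : g.ker = (dualCode U).comap C.subtype := by
    ext x
    rw [Submodule.mem_comap, mem_dualCode_span, Set.forall_mem_range]
    exact funext_iff
  have finrank_comap (A : Submodule K (Fin n → K)) :
      Module.finrank K (A.comap C.subtype) = Module.finrank K ↥(C ⊓ A) := by
    rw [← Submodule.map_comap_subtype, Submodule.finrank_map_subtype_eq]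
  have dim_C := finrank_inf_dualCode C U
  have dim_D := finrank_inf_dualCode D U
  have dim_le : Module.finrank K ↥(dualCode C ⊓ U) ≤ Module.finrank K ↥(dualCode D ⊓ U) :=
    Submodule.finrank_mono (inf_le_inf_right _ (dualCode_anti h))
  have : unifMutualInfo f g = _ := unifMutualInfo_linearMap f g
  refine this.trans ?_
  rw [ker_f, ker_g, ← Submodule.comap_inf, finrank_comap, finrank_comap, finrank_comap,
    inf_eq_right.2 h, ← inf_assoc, inf_eq_right.2 h, relDim, Nat.cast_sub dim_le]
  congr 1
  have dim_C : (_ : ℝ) = _ := congrArg Nat.cast dim_C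
  have dim_D : (_ : ℝ) = _ := congrArg Nat.cast dim_D
  push_cast at dim_C dim_D
  linear_combination dim_D - dim_C

section Descent

variable {K L ι : Type*} [Field K] [Field L] [Algebra K L]

variable (L) in
/-- The subspace of `L^ι` spanned over `L` by a `K`-subspace `W` of `K^ι`, that is, the image of
`L ⊗ W` in `L^ι`. -/
def scalarExtension (W : Submodule K (ι → K)) : Submodule L (ι → L) :=
  Submodule.span L (W.map (Pi.algebraMap ι K L))

lemma scalarExtension_mono : Monotone (scalarExtension L : Submodule K (ι → K) → _) :=
  fun _ _ h ↦ Submodule.span_mono (Submodule.map_mono h)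

lemma scalarExtension_span (s : Set (ι → K)) :
    scalarExtension L (Submodule.span K s) = Submodule.span L (Pi.algebraMap ι K L '' s) := by
  rw [scalarExtension, Submodule.map_span, Submodule.span_span_of_tower]

lemma finrank_scalarExtension [Finite ι] (W : Submodule K (ι → K)) :
    Module.finrank L (scalarExtension L W) = Module.finrank K W := by
  obtain ⟨B, B_indep, B_span⟩ := exists_linearIndependent_span_range_eq (W := W) rfl
  have B_indep_L : LinearIndependent L (Pi.algebraMap ι K L ∘ B) :=
    linearIndependent_algebraMap_comp_iff.2 B_indep
  conv_lhs => rw [← B_span, scalarExtension_span, ← Set.range_comp]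
  rw [finrank_span_eq_card B_indep_L, Fintype.card_fin]

lemma comp_mem_scalarExtension (σ : Gal(L/K)) {W : Submodule K (ι → K)} {v : ι → L}
    (hv : v ∈ scalarExtension L W) : σ ∘ v ∈ scalarExtension L W := by
  induction hv using Submodule.span_induction with
  | mem x hx =>
    obtain ⟨w, hw, rfl⟩ := hx
    have : σ ∘ Pi.algebraMap ι K L w = Pi.algebraMap ι K L w := funext fun i ↦ σ.commutes (w i)
    rw [this]
    exact Submodule.subset_span ⟨w, hw, rfl⟩
  | zero => simp [Function.comp_def, ← Pi.zero_def]
  | add x y _ _ hx hy =>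
    have : σ ∘ (x + y) = σ ∘ x + σ ∘ y := funext fun i ↦ map_add σ (x i) (y i)
    exact this ▸ add_mem hx hy
  | smul c x _ hx =>
    have : σ ∘ (c • x) = σ c • σ ∘ x := funext fun i ↦ map_mul σ c (x i)
    exact this ▸ Submodule.smul_mem _ _ hx

lemma trace_mem_of_forall_gal [FiniteDimensional K L] [IsGalois K L] {V : Submodule L (ι → L)}
    (hV : ∀ σ : Gal(L/K), ∀ v ∈ V, σ ∘ v ∈ V) {v : ι → L} (hv : v ∈ V) :
    Pi.algebraMap ι K L (fun i ↦ Algebra.trace K L (v i)) ∈ V := by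
  have : Pi.algebraMap ι K L (fun i ↦ Algebra.trace K L (v i)) = ∑ σ : Gal(L/K), σ ∘ v := by
    ext i
    rw [Finset.sum_apply]
    exact trace_eq_sum_automorphisms (v i)
  exact this ▸ sum_mem fun σ _ ↦ hV σ v hv

lemma eq_sum_traceDual_smul {κ : Type*} [Fintype κ] [DecidableEq κ] [FiniteDimensional K L]
    [Algebra.IsSeparable K L] (b : Module.Basis κ K L) (v : ι → L) :
    v = ∑ k, b.traceDual k •
      Pi.algebraMap ι K L (fun i ↦ Algebra.trace K L ((b k • v) i)) := by
  ext i
  conv_lhs => rw [← b.traceDual.sum_repr (v i)]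
  rw [Finset.sum_apply]
  refine Finset.sum_congr rfl fun k _ ↦ ?_
  rw [Module.Basis.traceDual_repr_apply, Algebra.smul_def, mul_comm, Algebra.traceForm_apply,
    mul_comm (v i)]
  rfl

lemma scalarExtension_comap_eq_of_forall_gal [FiniteDimensional K L] [IsGalois K L]
    {V : Submodule L (ι → L)} (hV : ∀ σ : Gal(L/K), ∀ v ∈ V, σ ∘ v ∈ V) :
    scalarExtension L ((V.restrictScalars K).comap (Pi.algebraMap ι K L)) = V := by
  classical
  refine le_antisymm (Submodule.span_le.2 (Submodule.map_comap_le _ _)) fun v hv ↦ ?_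
  rw [eq_sum_traceDual_smul (Module.finBasis K L) v]
  refine sum_mem fun k _ ↦ Submodule.smul_mem _ _ (Submodule.subset_span ?_)
  exact ⟨_, trace_mem_of_forall_gal hV (V.smul_mem _ hv), rfl⟩

end Descent

section Frobenius

variable {K L : Type*} [Field K] [Fintype K] [Field L] [Finite L] [Algebra K L] {n : ℕ}

lemma isGalClosed_iff_forall_gal {V : Submodule L (Fin n → L)} :
    IsGalClosed (Fintype.card K) V ↔ ∀ σ : Gal(L/K), ∀ v ∈ V, σ ∘ v ∈ V := by
  let φ := FiniteField.frobeniusAlgEquivOfAlgebraic K L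
  constructor
  · intro hV σ v hv
    have frobenius_mem {u} (hu : u ∈ V) : φ ∘ u ∈ V := hV.le ⟨u, hu, rfl⟩
    have frobenius_pow_mem (k : ℕ) : (φ ^ k : Gal(L/K)) ∘ v ∈ V := by
      induction k with
      | zero => exact hv
      | succ k ih => rw [pow_succ']; exact frobenius_mem ih
    obtain ⟨k, rfl⟩ := (FiniteField.bijective_frobeniusAlgEquivOfAlgebraic_pow K L).surjective σ
    exact frobenius_pow_mem k
  · refine fun hV ↦ Set.Subset.antisymm ?_ fun v hv ↦ ?_
    · rintro _ ⟨v, hv, rfl⟩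
      exact hV φ v hv
    · exact ⟨φ.symm ∘ v, hV φ.symm v hv, funext fun i ↦ φ.apply_symm_apply (v i)⟩

lemma isGalClosed_iff_exists_scalarExtension {V : Submodule L (Fin n → L)} :
    IsGalClosed (Fintype.card K) V ↔
      ∃ W : Submodule K (Fin n → K), scalarExtension L W = V := by
  rw [isGalClosed_iff_forall_gal (K := K)]
  constructor
  · exact fun hV ↦ ⟨_, scalarExtension_comap_eq_of_forall_gal hV⟩
  · rintro ⟨W, rfl⟩ σ v
    exact comp_mem_scalarExtension σ

lemma isGreatest_RDIP (D₁ D₂ : Submodule L (Fin n → L)) {i : ℕ} (hi : i ≤ n) :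
    IsGreatest
      {d | ∃ W : Submodule K (Fin n → K), Module.finrank K W = i ∧
        d = relDim D₁ D₂ (scalarExtension L W)}
      (RDIP (Fintype.card K) D₁ D₂ i) := by
  set S := {d | ∃ W : Submodule K (Fin n → K), Module.finrank K W = i ∧
        d = relDim D₁ D₂ (scalarExtension L W)}
  have RDIP_eq : RDIP (Fintype.card K) D₁ D₂ i = sSup S := by
    refine congrArg sSup (Set.ext fun d ↦ ?_)
    simp only [S, Set.mem_ofPred_eq, isGalClosed_iff_exists_scalarExtension, exists_exists_eq_and,
      finrank_scalarExtension, relDim]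
  have nonempty : S.Nonempty := by
    obtain ⟨W, -, hW⟩ := exists_ge_finrank_eq (⊥ : Submodule K (Fin n → K)) (k := i)
      (by simp) (by simpa using hi)
    exact ⟨_, W, hW, rfl⟩
  have bddAbove : BddAbove S := by
    refine ⟨Module.finrank L (Fin n → L), ?_⟩
    rintro _ ⟨W, -, rfl⟩
    exact (Nat.sub_le _ _).trans (Submodule.finrank_le _)
  rw [RDIP_eq]
  exact ⟨Nat.sSup_mem nonempty bddAbove, fun _ ↦ le_csSup bddAbove⟩

lemma isGreatest_RDIP_rowSpace {D₁ D₂ : Submodule L (Fin n → L)} (hD : D₂ ≤ D₁) {μ : ℕ}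
    (hμ : μ ≤ n) :
    IsGreatest
      (Set.range fun B : Fin μ → Fin n → K ↦
        relDim D₁ D₂ (scalarExtension L (Submodule.span K (Set.range B))))
      (RDIP (Fintype.card K) D₁ D₂ μ) := by
  obtain ⟨⟨W, hW, RDIP_eq⟩, le_RDIP⟩ := isGreatest_RDIP (K := K) D₁ D₂ hμ
  constructor
  · obtain ⟨B, -, B_span⟩ := exists_linearIndependent_span_range_eq hW
    exact ⟨B, by simp only [B_span, RDIP_eq]⟩
  · rintro _ ⟨B, rfl⟩
    obtain ⟨W', hBW', hW'⟩ := exists_ge_finrank_eq (Submodule.span K (Set.range B))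
      ((finrank_range_le_card B).trans_eq (Fintype.card_fin μ)) (by simpa using hμ)
    exact (relDim_mono hD (scalarExtension_mono hBW')).trans (le_RDIP ⟨W', hW', rfl⟩)

end Frobenius

/-- With `Ω = C1` uniform, `X` the identity and `S : C1 → C1/C2` the
quotient map, for every `0 ≤ μ ≤ n` the maximum information leakage over all
matrices `B ∈ F_q^{μ×n}` over the base field satisfies
`max_B I(S ; X Bᵀ) = K_{R,μ}(C2^⊥, C1^⊥) · m · log q` (in nats). -/
theorem stmt14 (m n l μ : ℕ) [Fintype Fq] [Fintype Fqm]
    (hq : Fintype.card Fq = q) (hm : Module.finrank Fq Fqm = m)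
    (C1 C2 : Submodule Fqm (Fin n → Fqm)) [Fintype ↥C1] (h12 : C2 < C1)
    (hl : Module.finrank Fqm ↥C1 = Module.finrank Fqm ↥C2 + l)
    (hμ : μ ≤ n) :
    IsGreatest
      {r : ℝ | ∃ B : Fin μ → Fin n → Fq,
        r = unifMutualInfo
          (fun x : ↥C1 => (Submodule.Quotient.mk x : ↥C1 ⧸ C2.comap C1.subtype))
          (fun x : ↥C1 => fun j : Fin μ =>
            ∑ i, (x : Fin n → Fqm) i * algebraMap Fq Fqm (B j i))}
      ((RDIP q (dualCode C2) (dualCode C1) μ : ℝ) * ((m : ℝ) * Real.log (q : ℝ))) := by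
  subst hq hm
  have log_card : Module.finrank Fq Fqm * Real.log (Fintype.card Fq) = Real.log (Nat.card Fqm) := by
    rw [Module.natCard_eq_pow_finrank (K := Fq), Nat.card_eq_fintype_card, Nat.cast_pow,
      Real.log_pow]
  have leakage (B : Fin μ → Fin n → Fq) :
      unifMutualInfo (C2.comap C1.subtype).mkQ (fun x : C1 ↦ fun j ↦
          (x : Fin n → Fqm) ⬝ᵥ Pi.algebraMap (Fin n) Fq Fqm (B j)) =
        relDim (dualCode C2) (dualCode C1) (scalarExtension Fqm (Submodule.span Fq (Set.range B))) *
          Real.log (Nat.card Fqm) := by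
    rw [scalarExtension_span, ← Set.range_comp]
    exact unifMutualInfo_mkQ_dotProduct h12.le _
  have mono : Monotone fun d : ℕ ↦ (d : ℝ) * Real.log (Nat.card Fqm) := fun _ _ h ↦
    mul_le_mul_of_nonneg_right (mod_cast h) (Real.log_natCast_nonneg _)
  rw [log_card]
  refine (congrArg (IsGreatest · _) (Set.ext fun r ↦ ?_)).mpr <|
    mono.map_isGreatest (isGreatest_RDIP_rowSpace (K := Fq) (dualCode_anti h12.le) hμ)
  rw [← Set.range_comp]
  exact exists_congr fun B ↦ eq_comm.trans (Eq.congr_left (leakage B))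

end
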